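/- Let a ≥ 1, ℓ ≥ 2, m ≥ ℓ, ρ = (m+1)a, r = ℓa, n = (m+ℓ)a. Let F be a field, Z = [Z1 | Z2] an a×2a zero-band MDS generator matrix over F, C an r×(ρ−r) super-regular matrix over F, and H the r×n parity-check matrix of C_{a,r,ρ} from Construction 1. Then for every j with (ℓ−1)a ≤ j and j + r − 1 ≤ (m+ℓ)a − 1, the r×r submatrix of H formed by the r consecutive columns indexed by {j, j+1, …, j+r−1} is invertible. -/

import Mathlib

theorem aux_det_ne_zero {F : Type*} [Field F] (n a j ρ : ℕ) (M : Matrix (Fin n) (Fin n) F)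
    (haj : a ≤ j) (hρ : a + n ≤ ρ) (hjr : j + a ≤ ρ)
    (hL : ∀ u v : Fin n, j + (v : ℕ) < n → (u : ℕ) < j + v → M u v = 0)
    (hLd : ∀ u v : Fin n, (u : ℕ) = j + v → M u v ≠ 0)
    (hR : ∀ u v : Fin n, ρ ≤ j + (v : ℕ) → ((u : ℕ) < a ∨ a + (j + v - ρ) < u) → M u v = 0)
    (hRd : ∀ u v : Fin n, ρ ≤ j + (v : ℕ) → (u : ℕ) = a + (j + v - ρ) → M u v ≠ 0)
    (hC : ∀ (s : ℕ) (ri ci : Fin s → Fin n), Function.Injective ri → Function.Injective ci →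
      (∀ i, n ≤ j + (ci i : ℕ) ∧ j + (ci i : ℕ) < ρ) → (M.submatrix ri ci).det ≠ 0) :
    M.det ≠ 0 := by
  classical
  intro hdet
  obtain ⟨x, hx0, hx⟩ := Matrix.exists_mulVec_eq_zero_iff.mpr hdet
  have hrow : ∀ u, ∑ v, M u v * x v = 0 := fun u => by
    have := congrFun hx u
    simpa [Matrix.mulVec, dotProduct] using this
  let S : Finset (Fin n) := Finset.univ.filter fun v => n ≤ j + (v : ℕ) ∧ j + (v : ℕ) < ρ
  let N : Finset (Fin n) := Finset.univ.filter fun u =>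
    ¬ (j ≤ (u : ℕ)) ∧ ¬ (a ≤ (u : ℕ) ∧ (u : ℕ) < a + (j + n - ρ))
  have hcard : Sᶜ.card = Nᶜ.card := by
    refine Finset.card_bij'
      (fun v _ => if h : j + (v : ℕ) < n then ⟨j + v, h⟩ else
        if h2 : a + (j + v - ρ) < n then ⟨a + (j + v - ρ), h2⟩ else v)
      (fun u _ => if h : j ≤ (u : ℕ) then ⟨u - j, by omega⟩ else
        if h2 : u + ρ - a - j < n then ⟨u + ρ - a - j, h2⟩ else u) ?_ ?_ ?_ ?_
    · intro v hv
      have := v.isLt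
      simp only [S, N, Finset.mem_compl, Finset.mem_filter, Finset.mem_univ, true_and] at hv ⊢
      split_ifs <;> (try dsimp only) <;> omega
    · intro v hv
      have := v.isLt
      simp only [S, N, Finset.mem_compl, Finset.mem_filter, Finset.mem_univ, true_and] at hv ⊢
      split_ifs <;> (try dsimp only) <;> omega
    · intro v hv
      have := v.isLt
      simp only [S, Finset.mem_compl, Finset.mem_filter, Finset.mem_univ, true_and] at hv
      apply Fin.ext
      by_cases h : j + (v : ℕ) < n
      · simp [h]
      · have h2 : a + (j + v - ρ) < n := by omega
        have h3 : ¬ j ≤ a + (j + v - ρ) := by omega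
        have h4 : a + (j + v - ρ) + ρ - a - j < n := by omega
        simp only [h, h2, h3, h4, dite_true, dite_false]
        omega
    · intro v hv
      have := v.isLt
      simp only [N, Finset.mem_compl, Finset.mem_filter, Finset.mem_univ, true_and] at hv
      apply Fin.ext
      by_cases h : j ≤ (v : ℕ)
      · have h2 : j + ((v : ℕ) - j) < n := by omega
        simp only [h, h2, dite_true]
        omega
      · have h2 : (v : ℕ) + ρ - a - j < n := by omega
        have h3 : ¬ j + ((v : ℕ) + ρ - a - j) < n := by omega
        have h4 : a + (j + ((v : ℕ) + ρ - a - j) - ρ) < n := by omega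
        simp only [h, h2, h3, h4, dite_true, dite_false]
        omega
  have hcard' : S.card = N.card := by
    have h1 := Finset.card_add_card_compl S
    have h2 := Finset.card_add_card_compl N
    omega
  let eS : Fin S.card ≃ S := S.equivFin.symm
  let eN : Fin S.card ≃ N := (N.equivFinOfCardEq hcard'.symm).symm
  have hxC : ∀ v ∈ S, x v = 0 := by
    have hd := hC S.card (fun i => (eN i : Fin n)) (fun i => (eS i : Fin n))
      (Subtype.val_injective.comp eN.injective) (Subtype.val_injective.comp eS.injective)
      (fun i => by
        have := (eS i).2
        exact (Finset.mem_filter.mp this).2)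
    have hz := Matrix.eq_zero_of_mulVec_eq_zero hd (v := fun i => x (eS i)) (by
      funext i
      have hu := (eN i).2
      simp only [N, Finset.mem_filter, Finset.mem_univ, true_and] at hu
      have h1 : ∑ k, M (eN i) (eS k) * x (eS k) = ∑ v : S, M (eN i) v * x v :=
        Equiv.sum_comp eS (fun v : S => M (eN i) v * x v)
      have h2 : ∑ v : S, M (eN i) v * x v = ∑ v ∈ S, M (eN i) v * x v :=
        Finset.sum_coe_sort S (fun v => M (eN i) v * x v)
      have h3 : ∑ v ∈ S, M (eN i) v * x v = ∑ v, M (eN i) v * x v := by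
        apply Finset.sum_subset (Finset.subset_univ _)
        intro v _ hv
        have := v.isLt
        simp only [S, Finset.mem_filter, Finset.mem_univ, true_and] at hv
        by_cases h : j + (v : ℕ) < n
        · rw [hL _ _ h (by omega), zero_mul]
        · rw [hR _ _ (by omega) (by omega), zero_mul]
      simp only [Matrix.mulVec, dotProduct, Matrix.submatrix_apply, Pi.zero_apply]
      rw [h1, h2, h3, hrow])
    intro v hv
    have := congrFun hz (eS.symm ⟨v, hv⟩)
    simpa using this
  have hxL : ∀ k : ℕ, ∀ v : Fin n, (v : ℕ) = k → j + (v : ℕ) < n → x v = 0 := by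
    intro k
    induction k using Nat.strong_induction_on with
    | _ k ih =>
      intro v hv h
      have hr := hrow ⟨j + v, h⟩
      rw [Finset.sum_eq_single v] at hr
      · exact (mul_eq_zero.mp hr).resolve_left (hLd _ _ rfl)
      · intro w _ hw
        have hwn := w.isLt
        have hne : (w : ℕ) ≠ v := fun h => hw (Fin.ext h)
        by_cases h1 : j + (w : ℕ) < n
        · by_cases h2 : (w : ℕ) < v
          · rw [ih w (by omega) w rfl h1, mul_zero]
          · rw [hL _ _ h1 (by simp only []; omega), zero_mul]
        · by_cases h2 : j + (w : ℕ) < ρ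
          · rw [hxC w (by simp [S]; omega), mul_zero]
          · rw [hR _ _ (by omega) (by right; simp only []; omega), zero_mul]
      · simp
  have hxR : ∀ k : ℕ, ∀ v : Fin n, n - (v : ℕ) = k → ρ ≤ j + (v : ℕ) → x v = 0 := by
    intro k
    induction k using Nat.strong_induction_on with
    | _ k ih =>
      intro v hv h
      have hvn := v.isLt
      have hr := hrow ⟨a + (j + v - ρ), by omega⟩
      rw [Finset.sum_eq_single v] at hr
      · exact (mul_eq_zero.mp hr).resolve_left (hRd _ _ h rfl)
      · intro w _ hw
        have hwn := w.isLt
        have hne : (w : ℕ) ≠ v := fun h => hw (Fin.ext h)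
        by_cases h1 : j + (w : ℕ) < n
        · rw [hxL _ w rfl h1, mul_zero]
        · by_cases h2 : j + (w : ℕ) < ρ
          · rw [hxC w (by simp [S]; omega), mul_zero]
          · by_cases h3 : (v : ℕ) < w
            · rw [ih (n - w) (by omega) w rfl (by omega), mul_zero]
            · rw [hR _ _ (by omega) (by right; simp only []; omega), zero_mul]
      · simp
  apply hx0
  funext v
  by_cases h1 : j + (v : ℕ) < n
  · exact hxL _ v rfl h1
  · by_cases h2 : j + (v : ℕ) < ρ
    · exact hxC v (by simp [S]; omega)
    · exact hxR _ v rfl (by omega)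

theorem aux_half_det {F : Type*} [Field F] (a : ℕ) (Z : Matrix (Fin a) (Fin (2 * a)) F)
    (hZMDS : ∀ cols : Finset (Fin (2 * a)), cols.card = a →
        LinearIndependent F (fun j : cols => fun u => Z u (j : Fin (2 * a))))
    (f : Fin a → Fin (2 * a)) (hf : Function.Injective f) :
    (Z.submatrix id f).det ≠ 0 := by
  classical
  have h := hZMDS (Finset.univ.image f) (by simp [Finset.card_image_of_injective _ hf])
  have h2 := h.comp (fun i : Fin a => (⟨f i, by simp⟩ : Finset.univ.image f))
    (fun i k hik => hf (by simpa using hik))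
  have h3 : LinearIndependent F (Z.submatrix id f).col := h2
  rw [Matrix.linearIndependent_cols_iff_isUnit, Matrix.isUnit_iff_isUnit_det] at h3
  exact h3.ne_zero


/-- The parity-check matrix `H` of the code `C_{a,r,ρ}` of Construction 1
(with `r = ℓa`): `H(0:a−1, 0:a−1) = I_a`; `H(ia:ia+a−1, ia:ia+a−1) = Z1` for
`i ∈ {1,…,ℓ−1}`; `H(0:r−1, r:ρ−1) = C`;
`H(ia:ia+a−1, ρ+(i−1)a:ρ+ia−1) = Z2` for `i ∈ {1,…,ℓ−1}`; all other entries
zero. -/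
def constructionOneH (F : Type*) [Field F] (a ℓ ρ : ℕ) (ha : 0 < a)
    (Z1 Z2 : Matrix (Fin a) (Fin a) F)
    (C : Matrix (Fin (ℓ * a)) (Fin (ρ - ℓ * a)) F) :
    Matrix (Fin (ℓ * a)) (Fin (ρ - a + ℓ * a)) F :=
  Matrix.of fun u v =>
    if hv1 : (v : ℕ) < ℓ * a then
      if (u : ℕ) / a = (v : ℕ) / a then
        if (v : ℕ) < a then (if (u : ℕ) = (v : ℕ) then 1 else 0)
        else Z1 ⟨(u : ℕ) % a, Nat.mod_lt _ ha⟩ ⟨(v : ℕ) % a, Nat.mod_lt _ ha⟩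
      else 0
    else if hv2 : (v : ℕ) < ρ then
      C u ⟨(v : ℕ) - ℓ * a, by omega⟩
    else
      if (u : ℕ) / a = ((v : ℕ) - ρ) / a + 1 then
        Z2 ⟨(u : ℕ) % a, Nat.mod_lt _ ha⟩ ⟨((v : ℕ) - ρ) % a, Nat.mod_lt _ ha⟩
      else 0

/-- In Construction 1 with `ρ = (m+1)a`, `r = ℓa`, `ℓ ≥ 2`,
`m ≥ ℓ`, every `r × r` submatrix of `H` formed by `r` consecutive columns
indexed by `{j, …, j+r−1}` with `(ℓ−1)a ≤ j` and `j+r−1 ≤ (m+ℓ)a−1` is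
invertible. -/
theorem constructionOne_consecutive_columns_invertible
    (F : Type*) [Field F] (a ℓ m : ℕ)
    (ha : 1 ≤ a) (hℓ : 2 ≤ ℓ) (hm : ℓ ≤ m)
    (Z : Matrix (Fin a) (Fin (2 * a)) F)
    (hZband : ∀ (i : Fin a) (j : Fin (2 * a)),
        (∃ s : ℕ, 1 ≤ s ∧ s ≤ a - 1 ∧ (j : ℕ) = ((i : ℕ) + s) % (2 * a)) → Z i j = 0)
    (hZMDS : ∀ cols : Finset (Fin (2 * a)), cols.card = a →
        LinearIndependent F (fun j : cols => fun u => Z u (j : Fin (2 * a))))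
    (Z1 Z2 : Matrix (Fin a) (Fin a) F)
    (hZ1 : ∀ (i j : Fin a), Z1 i j = Z i ⟨(j : ℕ), by have := j.isLt; omega⟩)
    (hZ2 : ∀ (i j : Fin a), Z2 i j = Z i ⟨a + (j : ℕ), by have := j.isLt; omega⟩)
    (C : Matrix (Fin (ℓ * a)) (Fin ((m + 1) * a - ℓ * a)) F)
    (hC : ∀ (s : ℕ) (ri : Fin s → Fin (ℓ * a)) (ci : Fin s → Fin ((m + 1) * a - ℓ * a)),
        Function.Injective ri → Function.Injective ci →
        (C.submatrix ri ci).det ≠ 0) :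
    ∀ (j : ℕ) (h1 : (ℓ - 1) * a ≤ j) (h2 : j + ℓ * a ≤ (m + ℓ) * a),
      IsUnit
        (Matrix.of fun (u v : Fin (ℓ * a)) =>
            constructionOneH F a ℓ ((m + 1) * a) (by omega) Z1 Z2 C u
              ⟨j + (v : ℕ), by
                have := v.isLt
                have h3 : (m + 1) * a = m * a + a := by ring
                have h4 : (m + ℓ) * a = m * a + ℓ * a := by ring
                omega⟩).det := by
  intro j h1 h2
  have hn : (ℓ - 1) * a + a = ℓ * a := by
    rw [← Nat.succ_mul]; congr 1; omega
  have hm1 : (m + 1) * a = m * a + a := by ring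
  have hml : (m + ℓ) * a = m * a + ℓ * a := by ring
  have hle : ℓ * a ≤ m * a := Nat.mul_le_mul_right a hm
  have hal : a ≤ (ℓ - 1) * a := Nat.le_mul_of_pos_left a (by omega)
  have hZ1t : ∀ i k : Fin a, i < k → Z1 i k = 0 := by
    intro i k hik
    have := k.isLt
    have hik' : (i : ℕ) < k := hik
    rw [hZ1]
    apply hZband
    refine ⟨k - i, by omega, by omega, ?_⟩
    rw [Nat.mod_eq_of_lt (by omega)]
    simp only []; omega
  have hZ2t : ∀ i k : Fin a, k < i → Z2 i k = 0 := by
    intro i k hik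
    have := i.isLt
    have hik' : (k : ℕ) < i := hik
    rw [hZ2]
    apply hZband
    refine ⟨a + k - i, by omega, by omega, ?_⟩
    rw [Nat.mod_eq_of_lt (by omega)]
    simp only []; omega
  have hZ1d : ∀ i : Fin a, Z1 i i ≠ 0 := by
    have h := aux_half_det a Z hZMDS (fun k => ⟨(k : ℕ), by have := k.isLt; omega⟩)
      (fun x y hxy => by simpa [Fin.ext_iff] using hxy)
    have he : Z.submatrix id (fun k : Fin a => (⟨(k : ℕ), by have := k.isLt; omega⟩ : Fin (2 * a)))
        = Z1 := by ext i k; simp [hZ1]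
    rw [he, Matrix.det_of_lowerTriangular Z1 (fun i k hik => hZ1t i k hik)] at h
    intro i
    exact Finset.prod_ne_zero_iff.mp h i (Finset.mem_univ _)
  have hZ2d : ∀ i : Fin a, Z2 i i ≠ 0 := by
    have h := aux_half_det a Z hZMDS (fun k => ⟨a + (k : ℕ), by have := k.isLt; omega⟩)
      (fun x y hxy => by simpa [Fin.ext_iff] using hxy)
    have he : Z.submatrix id
        (fun k : Fin a => (⟨a + (k : ℕ), by have := k.isLt; omega⟩ : Fin (2 * a)))
        = Z2 := by ext i k; simp [hZ2]
    rw [he, Matrix.det_of_upperTriangular (fun i k hik => hZ2t i k hik)] at h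
    intro i
    exact Finset.prod_ne_zero_iff.mp h i (Finset.mem_univ _)
  rw [isUnit_iff_ne_zero]
  apply aux_det_ne_zero (ℓ * a) a j ((m + 1) * a)
  · omega
  · omega
  · omega
  · intro u v hv hu
    simp only [Matrix.of_apply, constructionOneH, hv, dite_true]
    split_ifs with h3 h4 h5
    · omega
    · rfl
    · apply hZ1t
      simp only [Fin.lt_def]
      have e1 := Nat.div_add_mod (u : ℕ) a
      have e2 := Nat.div_add_mod (j + v : ℕ) a
      rw [h3] at e1
      omega
    · rfl
  · intro u v hu
    have hv : j + (v : ℕ) < ℓ * a := by have := u.isLt; omega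
    have h4 : ¬ j + (v : ℕ) < a := by omega
    simp only [Matrix.of_apply, constructionOneH, hv, dite_true, hu, h4, if_true, if_false]
    exact hZ1d _
  · intro u v hv hu
    have hv1 : ¬ j + (v : ℕ) < ℓ * a := by omega
    have hv2 : ¬ j + (v : ℕ) < (m + 1) * a := by omega
    simp only [Matrix.of_apply, constructionOneH, hv1, hv2, dite_false]
    split_ifs with h3
    · apply hZ2t
      simp only [Fin.lt_def]
      have e1 := Nat.div_add_mod (u : ℕ) a
      have e2 := Nat.div_add_mod (j + v - (m + 1) * a : ℕ) a
      rw [h3, mul_add, mul_one] at e1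
      omega
    · rfl
  · intro u v hv hu
    have hv1 : ¬ j + (v : ℕ) < ℓ * a := by omega
    have hv2 : ¬ j + (v : ℕ) < (m + 1) * a := by omega
    have h3 : (u : ℕ) / a = (j + v - (m + 1) * a) / a + 1 := by
      rw [hu, Nat.add_div_left _ (by omega)]
    simp only [Matrix.of_apply, constructionOneH, hv1, hv2, dite_false, h3, if_true]
    have h4 : (u : ℕ) % a = (j + v - (m + 1) * a) % a := by
      rw [hu, Nat.add_mod_left]
    simp only [h4]
    exact hZ2d _
  · intro s ri ci hri hci hr
    have h := hC s ri (fun i => ⟨j + (ci i : ℕ) - ℓ * a, by have := hr i; omega⟩) hri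
      (fun x y hxy => by
        have hx := hr x
        have hy := hr y
        simp only [Fin.mk.injEq] at hxy
        exact hci (Fin.ext (by omega)))
    convert h using 2
    ext i k
    have hk := hr k
    have hv1 : ¬ j + (ci k : ℕ) < ℓ * a := by omega
    simp only [Matrix.submatrix_apply, Matrix.of_apply, constructionOneH, hv1, hk.2, dite_false,
      dite_true]
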